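/- arXiv:2312.15954 — 2 statements merged into one kernel-verified Lean document; each statement's English description precedes it below -/
import Mathlib

section
/- Let p be a prime, n ≥ 1, R = ZMod (p^n), and let u0 be a fixed unit of R. Suppose the pair (v1, v2) of vectors in ι → R satisfies the column conditions (C1), (C2), (C4), (C5), satisfies (C3) for every unit u ≠ u0, but contains no unit multiple of the column (1, u0), i.e. there is no index i and unit w of R with v1 i = w and v2 i = w * u0. Then the code M generated by v1 and v2 is not minimal: there exist codewords w, w' ∈ M with w' ≠ 0, supp(w') ⊆ supp(w), and w' ≠ a • w for every a ∈ R. -/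
/-!
The codeword `w = u0 • v1 - v2` vanishes at a column `(x, y)` exactly when `y = x * u0`, so by
hypothesis it can vanish only where `v1` is not a unit. Multiplication by `p ^ (n - 1)` kills every
non-unit of `ZMod (p ^ n)`, hence `w' = p ^ (n - 1) • v1` is supported inside the support of `w`.
It is nonzero at the column `(1, 0)`, while at the column `(0, 1)` it vanishes and `w` takes the
value `-1`, so `w' = a • w` would force `a = 0` and `w' = 0`.
-/

/-- `p ^ (n - 1)` annihilates the maximal ideal of `ZMod (p ^ n)`. -/
lemma isUnit_of_pow_pred_mul_ne_zero {p n : ℕ} (hp : p.Prime) (hn : 1 ≤ n) (x : ZMod (p ^ n))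
    (hx : (p : ZMod (p ^ n)) ^ (n - 1) * x ≠ 0) : IsUnit x := by
  haveI : NeZero (p ^ n) := ⟨pow_ne_zero _ hp.ne_zero⟩
  obtain ⟨k, rfl⟩ := ZMod.natCast_zmod_surjective x
  rw [ZMod.isUnit_iff_coprime]
  refine Nat.Coprime.pow_right n (Nat.Coprime.symm ((hp.coprime_iff_not_dvd).2 fun hdvd => hx ?_))
  have h : p ^ n ∣ p ^ (n - 1) * k := by
    obtain ⟨m, rfl⟩ : ∃ m, n = m + 1 := ⟨n - 1, by omega⟩
    simpa [pow_succ] using Nat.mul_dvd_mul_left (p ^ m) hdvd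
  exact_mod_cast (ZMod.natCast_eq_zero_iff _ _).2 h

lemma pow_pred_ne_zero {p n : ℕ} (hp : p.Prime) (hn : 1 ≤ n) :
    (p : ZMod (p ^ n)) ^ (n - 1) ≠ 0 := by
  intro h
  have h' : ((p ^ (n - 1) : ℕ) : ZMod (p ^ n)) = 0 := by exact_mod_cast h
  rw [ZMod.natCast_eq_zero_iff, Nat.pow_dvd_pow_iff_le_right hp.one_lt] at h'
  omega

/-- If (C1), (C2), (C4), (C5) hold, (C3) holds for every unit `u ≠ u0`,
but no unit multiple of the column `(1, u0)` is present, then the code generated by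
`v1, v2` is not minimal. -/
theorem not_minimal_without_unit_column {ι : Type*} [Fintype ι] (p n : ℕ)
    (hp : p.Prime) (hn : 1 ≤ n)
    (u0 : ZMod (p ^ n)) (hu0 : IsUnit u0)
    (v1 v2 : ι → ZMod (p ^ n))
    (hC1 : ∃ i, v1 i = 1 ∧ v2 i = 0)
    (hC2 : ∃ i, v1 i = 0 ∧ v2 i = 1)
    (hC3 : ∀ u : ZMod (p ^ n), IsUnit u → u ≠ u0 → ∃ i, v1 i = 1 ∧ v2 i = u)
    (hC4 : ∀ d : ZMod (p ^ n), d ≠ 0 → ¬ IsUnit d → ∃ i, v1 i = 1 ∧ v2 i = d)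
    (hC5 : ∀ d : ZMod (p ^ n), d ≠ 0 → ¬ IsUnit d → ∃ i, v1 i = d ∧ v2 i = 1)
    (hno : ¬ ∃ i, ∃ w : ZMod (p ^ n), IsUnit w ∧ v1 i = w ∧ v2 i = w * u0) :
    ∃ c1 c2 c1' c2' : ZMod (p ^ n),
      c1' • v1 + c2' • v2 ≠ 0 ∧
      {i | (c1' • v1 + c2' • v2) i ≠ 0} ⊆ {i | (c1 • v1 + c2 • v2) i ≠ 0} ∧
      ∀ a : ZMod (p ^ n), c1' • v1 + c2' • v2 ≠ a • (c1 • v1 + c2 • v2) := by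
  obtain ⟨i, hi1, hi2⟩ := hC1
  obtain ⟨j, hj1, hj2⟩ := hC2
  have hne : (p : ZMod (p ^ n)) ^ (n - 1) ≠ 0 := pow_pred_ne_zero hp hn
  refine ⟨u0, -1, (p : ZMod (p ^ n)) ^ (n - 1), 0, ?_, ?_, ?_⟩
  · intro h
    exact hne (by simpa [hi1] using congrFun h i)
  · intro k hk hk0
    have hunit : IsUnit (v1 k) :=
      isUnit_of_pow_pred_mul_ne_zero hp hn _ (by simpa using hk)
    have hk0' : u0 * v1 k + -v2 k = 0 := by simpa using hk0
    exact hno ⟨k, v1 k, hunit, rfl, by linear_combination -hk0'⟩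
  · intro a h
    have ha : a = 0 := by simpa [hj1, hj2] using congrFun h j
    exact hne (by simpa [ha, hi1] using congrFun h i)
end

section
/- Let p be a prime, n ≥ 1, and R = ZMod (p^n). Suppose the pair (v1, v2) of vectors in ι → R contains the standard columns (C1)–(C5). Then for every k2 ∈ R the codeword k2 • v2 is minimal in the code M generated by v1 and v2: every nonzero codeword w' ∈ M with supp(w') ⊆ supp(k2 • v2) satisfies w' = a • (k2 • v2) for some a ∈ R. -/
/-!
At the column `(1, 0)` the word `k2 • v2` vanishes, so a codeword `c1' • v1 + c2' • v2` whose support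
lies in that of `k2 • v2` has `c1' = 0`. Every element of `ZMod (p ^ n)` occurs as a coordinate
of `v2`, so the inclusion of supports says that every annihilator of `k2` annihilates `c2'`. In
`ZMod N` this forces `k2 ∣ c2'` (`ZMod.dvd_of_annihilator_le`), and the quotient is the required
scalar.
-/

/-- In `ZMod N`, `N ≠ 0`, each principal ideal is its own double annihilator: `k` generates the same
ideal as `g = gcd k N`, and the annihilator `N / g` of `k` kills `c` only if `g ∣ c`. -/
theorem ZMod.dvd_of_annihilator_le {N : ℕ} [NeZero N] (k c : ZMod N)
    (h : ∀ d : ZMod N, k * d = 0 → c * d = 0) : k ∣ c := by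
  obtain ⟨m, hm⟩ := Nat.gcd_dvd_right k.val N
  obtain ⟨q, hq⟩ := Nat.gcd_dvd_left k.val N
  have hN : N ≠ 0 := NeZero.ne N
  have hm0 : 0 < m := Nat.pos_of_ne_zero (by rintro rfl; simp at hm; exact hN hm)
  have hk : k * (m : ZMod N) = 0 := by
    rw [← ZMod.natCast_zmod_val k, ← Nat.cast_mul, ZMod.natCast_eq_zero_iff]
    refine ⟨q, ?_⟩
    calc k.val * m = (k.val.gcd N * q) * m := by rw [← hq]
      _ = (k.val.gcd N * m) * q := by ring
      _ = N * q := by rw [← hm]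
  have hc := h _ hk
  rw [← ZMod.natCast_zmod_val c, ← Nat.cast_mul, ZMod.natCast_eq_zero_iff] at hc
  have hgc : k.val.gcd N ∣ c.val :=
    Nat.dvd_of_mul_dvd_mul_right hm0 (hm ▸ hc)
  obtain ⟨r, hr⟩ := hgc
  -- Bézout, read modulo `N`, exhibits the gcd as a multiple of `k`.
  have hb := congrArg (Int.cast : ℤ → ZMod N) (Nat.gcd_eq_gcd_ab k.val N)
  push_cast at hb
  rw [ZMod.natCast_self, zero_mul, add_zero, ZMod.natCast_zmod_val] at hb
  refine ⟨(k.val.gcdA N : ZMod N) * r, ?_⟩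
  rw [← ZMod.natCast_zmod_val c, hr, Nat.cast_mul, hb, mul_assoc]

/-- With the standard columns (C1)–(C5), every codeword of the form
`k2 • v2` is minimal in the code generated by `v1, v2`. -/
theorem type2_vectors_minimal {ι : Type*} [Fintype ι] (p n : ℕ) (hp : p.Prime) (hn : 1 ≤ n)
    (v1 v2 : ι → ZMod (p ^ n))
    (hC1 : ∃ i, v1 i = 1 ∧ v2 i = 0)
    (hC2 : ∃ i, v1 i = 0 ∧ v2 i = 1)
    (hC3 : ∀ u : ZMod (p ^ n), IsUnit u → ∃ i, v1 i = 1 ∧ v2 i = u)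
    (hC4 : ∀ d : ZMod (p ^ n), d ≠ 0 → ¬ IsUnit d → ∃ i, v1 i = 1 ∧ v2 i = d)
    (hC5 : ∀ d : ZMod (p ^ n), d ≠ 0 → ¬ IsUnit d → ∃ i, v1 i = d ∧ v2 i = 1) :
    ∀ k2 : ZMod (p ^ n), ∀ c1' c2' : ZMod (p ^ n),
      c1' • v1 + c2' • v2 ≠ 0 →
      {i | (c1' • v1 + c2' • v2) i ≠ 0} ⊆ {i | (k2 • v2) i ≠ 0} →
      ∃ a : ZMod (p ^ n), c1' • v1 + c2' • v2 = a • (k2 • v2) := by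
  intro k2 c1 c2 _ hsub
  have : NeZero (p ^ n) := ⟨pow_ne_zero n hp.ne_zero⟩
  have hzero : ∀ i, k2 * v2 i = 0 → c1 * v1 i + c2 * v2 i = 0 := by
    intro i hi
    by_contra hne
    exact hsub (a := i) hne hi
  obtain ⟨i₀, h1, h2⟩ := hC1
  have hc1 : c1 = 0 := by simpa [h1, h2] using hzero i₀ (by simp [h2])
  have hdvd : k2 ∣ c2 := by
    refine ZMod.dvd_of_annihilator_le k2 c2 fun d hd => ?_
    have hcol : ∃ i, v2 i = d := by
      by_cases hd0 : d = 0
      · exact ⟨i₀, h2.trans hd0.symm⟩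
      by_cases hu : IsUnit d
      · exact (hC3 d hu).imp fun _ h => h.2
      · exact (hC4 d hd0 hu).imp fun _ h => h.2
    obtain ⟨i, rfl⟩ := hcol
    simpa [hc1] using hzero i hd
  obtain ⟨a, rfl⟩ := hdvd
  exact ⟨a, by rw [hc1, zero_smul, zero_add, smul_smul, mul_comm]⟩
end
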